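/- arXiv:2602.12214 — 5 statements merged into one kernel-verified Lean document; each statement's English description precedes it below -/
import Mathlib

section
/- There exists an optimal solution x* of the CKP-LP — i.e. x* ∈ P_CKP and ∑_i p_i x*_i ≥ ∑_i p_i x_i for all x ∈ P_CKP — such that at most two coordinates of x* are fractional, i.e. |{i : 0 < x*_i < 1}| ≤ 2. -/
/-!
A linear program whose feasible region is compact and nonempty has an optimal solution that is an
extreme point of the region. At an extreme point of a polyhedron no nonzero direction is
annihilated by all tight constraints. Hence, at an extreme point of a box cut by further
half-spaces, the vectors supported on the coordinates strictly between their bounds embed linearly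
into the functions on the tight half-spaces, so there are at most as many such coordinates as tight
half-spaces. Finally, at most two constraints of the CKP-LP besides the box are tight: the capacity
constraint and one color constraint, since two distinct color gaps at a nonnegative point add up to
at most `0`.
-/

/-- The "color gap" of color `c` at `x`: `∑_{i : κ i = c} x i − ∑_{i : κ i ≠ c} x i`.
The color constraint of `c` is `colorGap n m κ x c ≤ 1`. -/
noncomputable def colorGap (n m : ℕ) (κ : Fin n → Fin m) (x : Fin n → ℝ) (c : Fin m) : ℝ :=
  (∑ i ∈ Finset.univ.filter (fun i => κ i = c), x i)
    - ∑ i ∈ Finset.univ.filter (fun i => κ i ≠ c), x i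

/-- Membership in the CKP-LP region `P_CKP`:
`x ∈ [0,1]^n`, `∑ i, w i * x i ≤ b`, and every color constraint holds. -/
def ckpFeas (n m : ℕ) (κ : Fin n → Fin m) (w : Fin n → ℝ) (b : ℝ) (x : Fin n → ℝ) : Prop :=
  (∀ i, 0 ≤ x i ∧ x i ≤ 1) ∧ (∑ i, w i * x i) ≤ b ∧ ∀ c : Fin m, colorGap n m κ x c ≤ 1

section Polyhedron

variable {𝕜 E ι J : Type*} [Field 𝕜] [LinearOrder 𝕜] [AddCommGroup E] [Module 𝕜 E]

/-- The polyhedron cut out by the half-spaces `f j x ≤ β j`. It is given by the constraints, rather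
than as a set, so that one can speak of the constraints that are tight at a point. -/
def polyhedron (f : J → Module.Dual 𝕜 E) (β : J → 𝕜) : Set E :=
  {x | ∀ j, f j x ≤ β j}

theorem isClosed_polyhedron [TopologicalSpace 𝕜] [OrderClosedTopology 𝕜] [TopologicalSpace E]
    {f : J → Module.Dual 𝕜 E} (hf : ∀ j, Continuous (f j)) (β : J → 𝕜) :
    IsClosed (polyhedron f β) := by
  rw [polyhedron, Set.ofPred_forall]
  exact isClosed_iInter fun j => isClosed_le (hf j) continuous_const

variable [IsStrictOrderedRing 𝕜]

theorem eq_zero_of_add_mem_of_sub_mem_of_mem_extremePoints {A : Set E} {x d : E}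
    (hx : x ∈ A.extremePoints 𝕜) (hadd : x + d ∈ A) (hsub : x - d ∈ A) : d = 0 := by
  have hmid : x ∈ openSegment 𝕜 (x + d) (x - d) :=
    ⟨1 / 2, 1 / 2, by norm_num, by norm_num, by norm_num, by module⟩
  simpa using hx.2 hadd hsub hmid

theorem exists_pos_forall_abs_mul_le [Finite J] {s a : J → 𝕜} (hs : ∀ j, 0 ≤ s j)
    (ha : ∀ j, s j = 0 → a j = 0) : ∃ ε > 0, ∀ j, |ε * a j| ≤ s j := by
  have hlocal : ∀ j, ∃ δ > 0, ∀ ε, 0 < ε → ε < δ → |ε * a j| ≤ s j := by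
    intro j
    obtain hj | hj := (hs j).eq_or_lt
    · exact ⟨1, one_pos, fun ε _ _ => by simp [ha j hj.symm, hs j]⟩
    · have hpos : 0 < |a j| + 1 := by positivity
      refine ⟨s j / (|a j| + 1), div_pos hj hpos, fun ε hε hεδ => ?_⟩
      rw [lt_div_iff₀ hpos] at hεδ
      rw [abs_mul, abs_of_pos hε]
      linarith
  choose δ hδ hbound using hlocal
  obtain ⟨ε, hε, hεδ⟩ := Pi.exists_forall_pos_add_lt hδ
  exact ⟨ε, hε, fun j => hbound j ε hε (by simpa using hεδ j)⟩

theorem eq_zero_of_mem_extremePoints_polyhedron [Finite J] {f : J → Module.Dual 𝕜 E} {β : J → 𝕜}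
    {x d : E} (hx : x ∈ (polyhedron f β).extremePoints 𝕜) (hd : ∀ j, f j x = β j → f j d = 0) :
    d = 0 := by
  obtain ⟨ε, hε, hstep⟩ := exists_pos_forall_abs_mul_le
    (s := fun j => β j - f j x) (a := fun j => f j d) (fun j => sub_nonneg.2 (hx.1 j))
    (fun j hj => hd j (sub_eq_zero.1 hj).symm)
  have hadd : x + ε • d ∈ polyhedron f β := fun j => by
    rw [map_add, map_smul, smul_eq_mul]
    linarith [(abs_le.1 (hstep j)).2]
  have hsub : x - ε • d ∈ polyhedron f β := fun j => by
    rw [map_sub, map_smul, smul_eq_mul]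
    linarith [(abs_le.1 (hstep j)).1]
  have hεd := eq_zero_of_add_mem_of_sub_mem_of_mem_extremePoints hx hadd hsub
  exact (smul_eq_zero.1 hεd).resolve_left hε.ne'

theorem Icc_inter_polyhedron_eq_polyhedron (l u : ι → 𝕜) (f : J → Module.Dual 𝕜 (ι → 𝕜))
    (β : J → 𝕜) :
    Set.Icc l u ∩ polyhedron f β =
      polyhedron (Sum.elim (Sum.elim (fun i => -LinearMap.proj i) LinearMap.proj) f)
        (Sum.elim (Sum.elim (-l) u) β) := by
  ext x
  simp [polyhedron, Pi.le_def]

theorem eq_zero_of_mem_extremePoints_Icc_inter_polyhedron [Finite ι] [Finite J] {l u : ι → 𝕜}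
    {f : J → Module.Dual 𝕜 (ι → 𝕜)} {β : J → 𝕜} {x d : ι → 𝕜}
    (hx : x ∈ (Set.Icc l u ∩ polyhedron f β).extremePoints 𝕜)
    (hdl : ∀ i, x i = l i → d i = 0) (hdu : ∀ i, x i = u i → d i = 0)
    (hdf : ∀ j, f j x = β j → f j d = 0) : d = 0 := by
  rw [Icc_inter_polyhedron_eq_polyhedron] at hx
  refine eq_zero_of_mem_extremePoints_polyhedron hx ?_
  rintro ((i | i) | j) htight
  · simpa using hdl i (by simpa using htight)
  · exact hdu i htight
  · exact hdf j htight

theorem ncard_strictly_between_le_ncard_tight [Finite ι] [Finite J] {l u : ι → 𝕜}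
    {f : J → Module.Dual 𝕜 (ι → 𝕜)} {β : J → 𝕜} {x : ι → 𝕜}
    (hx : x ∈ (Set.Icc l u ∩ polyhedron f β).extremePoints 𝕜) :
    {i | l i < x i ∧ x i < u i}.ncard ≤ {j | f j x = β j}.ncard := by
  set S := {i | l i < x i ∧ x i < u i}
  set T := {j | f j x = β j}
  let extend : (S → 𝕜) →ₗ[𝕜] (ι → 𝕜) := Function.ExtendByZero.linearMap 𝕜 Subtype.val
  let evalTight : (ι → 𝕜) →ₗ[𝕜] (T → 𝕜) := LinearMap.pi fun j => f j
  have hsupp : ∀ v, ∀ i ∉ S, extend v i = 0 := fun v i hi =>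
    Function.extend_apply' _ _ _ (by simpa using hi)
  have hinj : Function.Injective (evalTight ∘ₗ extend) := by
    rw [injective_iff_map_eq_zero]
    intro v hv
    have hextend : extend v = 0 := eq_zero_of_mem_extremePoints_Icc_inter_polyhedron hx
      (fun i hi => hsupp v i fun hiS => hiS.1.ne' hi)
      (fun i hi => hsupp v i fun hiS => hiS.2.ne hi)
      (fun j hj => congrFun hv ⟨j, hj⟩)
    exact Function.extend_injective Subtype.val_injective (0 : ι → 𝕜)
      (hextend.trans (map_zero extend).symm)
  have := Fintype.ofFinite S
  have := Fintype.ofFinite T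
  calc S.ncard = Module.finrank 𝕜 (S → 𝕜) := by
        rw [Module.finrank_fintype_fun_eq_card, Fintype.card_eq_nat_card, Nat.card_coe_set_eq]
    _ ≤ Module.finrank 𝕜 (T → 𝕜) := LinearMap.finrank_le_finrank_of_injective hinj
    _ = T.ncard := by
        rw [Module.finrank_fintype_fun_eq_card, Fintype.card_eq_nat_card, Nat.card_coe_set_eq]

end Polyhedron

theorem exists_mem_extremePoints_isMaxOn {E : Type*} [AddCommGroup E] [Module ℝ E]
    [TopologicalSpace E] [T2Space E] [IsTopologicalAddGroup E] [ContinuousSMul ℝ E]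
    [LocallyConvexSpace ℝ E] {A : Set E} (hA : IsCompact A) (hne : A.Nonempty)
    (φ : StrongDual ℝ E) : ∃ x ∈ A.extremePoints ℝ, IsMaxOn φ A x := by
  obtain ⟨y, hyA, hy⟩ := hA.exists_isMaxOn hne φ.continuous.continuousOn
  have hface : IsExposed ℝ A (φ.toExposed A) := ContinuousLinearMap.toExposed.isExposed
  obtain ⟨x, hx⟩ := (hface.isCompact hA).extremePoints_nonempty ⟨y, hyA, hy⟩
  exact ⟨x, hface.isExtreme.extremePoints_subset_extremePoints hx, hx.1.2⟩

section ColoredKnapsack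

variable {n m : ℕ} {κ : Fin n → Fin m} {w : Fin n → ℝ} {b : ℝ} {x : Fin n → ℝ}

theorem colorGap_add_nonpos (hx : 0 ≤ x) {c e : Fin m} (hce : c ≠ e) :
    colorGap n m κ x c + colorGap n m κ x e ≤ 0 := by
  have hle : ∀ {c e : Fin m}, c ≠ e → ∑ i with κ i = c, x i ≤ ∑ i with κ i ≠ e, x i :=
    fun hce => Finset.sum_le_sum_of_subset_of_nonneg
      (Finset.monotone_filter_right _ fun _ _ hi => hi ▸ hce) fun i _ _ => hx i
  unfold colorGap
  linarith [hle hce, hle hce.symm]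

theorem subsingleton_tight_colors (hx : 0 ≤ x) :
    {c | colorGap n m κ x c = 1}.Subsingleton := by
  intro c (hc : _ = 1) e (he : _ = 1)
  by_contra hce
  linarith [colorGap_add_nonpos (κ := κ) hx hce]

/-- The constraint functionals of the CKP-LP besides the box constraints: `none` stands for the
capacity constraint and `some c` for the constraint of the color `c`. -/
def ckpFunctional (κ : Fin n → Fin m) (w : Fin n → ℝ) :
    Option (Fin m) → Module.Dual ℝ (Fin n → ℝ)
  | none => dotProductBilin ℝ ℝ w
  | some c => ∑ i with κ i = c, LinearMap.proj i - ∑ i with κ i ≠ c, LinearMap.proj i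

/-- The right-hand sides of the constraints given by `ckpFunctional`. -/
def ckpBound (m : ℕ) (b : ℝ) : Option (Fin m) → ℝ
  | none => b
  | some _ => 1

theorem ckpFunctional_none_apply : ckpFunctional κ w none x = ∑ i, w i * x i := rfl

theorem ckpFunctional_some_apply (c : Fin m) :
    ckpFunctional κ w (some c) x = colorGap n m κ x c := by
  simp [ckpFunctional, colorGap]

theorem ckpFeas_eq_Icc_inter_polyhedron :
    {x | ckpFeas n m κ w b x} =
      Set.Icc 0 1 ∩ polyhedron (ckpFunctional κ w) (ckpBound m b) := by
  ext x
  simp [ckpFeas, polyhedron, Option.forall, ckpFunctional_none_apply, ckpFunctional_some_apply,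
    ckpBound, Pi.le_def, forall_and]

theorem isCompact_ckpFeas : IsCompact {x | ckpFeas n m κ w b x} := by
  rw [ckpFeas_eq_Icc_inter_polyhedron]
  exact isCompact_Icc.inter_right
    (isClosed_polyhedron (fun j => (ckpFunctional κ w j).continuous_of_finiteDimensional) _)

theorem ncard_tight_ckpFunctional_le_two (hx : 0 ≤ x) :
    {j | ckpFunctional κ w j x = ckpBound m b j}.ncard ≤ 2 := by
  have hsub : {j | ckpFunctional κ w j x = ckpBound m b j} ⊆
      insert none (some '' {c | colorGap n m κ x c = 1}) := by
    rintro (_ | c) hj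
    · exact Set.mem_insert _ _
    · exact Set.mem_insert_of_mem _ ⟨c, (ckpFunctional_some_apply c).symm.trans hj, rfl⟩
  calc {j | ckpFunctional κ w j x = ckpBound m b j}.ncard
      ≤ (insert none (some '' {c | colorGap n m κ x c = 1})).ncard := Set.ncard_le_ncard hsub
    _ ≤ (some '' {c | colorGap n m κ x c = 1}).ncard + 1 := Set.ncard_insert_le _ _
    _ ≤ 1 + 1 := by
      gcongr
      exact Set.ncard_le_one_iff_subsingleton.2 ((subsingleton_tight_colors hx).image some)

theorem ncard_fractional_le_two (hx : x ∈ {x | ckpFeas n m κ w b x}.extremePoints ℝ) :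
    {i | 0 < x i ∧ x i < 1}.ncard ≤ 2 := by
  have hnonneg : 0 ≤ x := fun i => (hx.1.1 i).1
  rw [ckpFeas_eq_Icc_inter_polyhedron] at hx
  exact (ncard_strictly_between_le_ncard_tight hx).trans (ncard_tight_ckpFunctional_le_two hnonneg)

theorem ckpFeas_zero (hb : 0 ≤ b) : ckpFeas n m κ w b 0 :=
  ⟨by simp, by simpa using hb, by simp [colorGap]⟩

theorem ckp_lp_optimum_with_at_most_two_fractional_general (p : Fin n → ℝ)
    (hfeas : ∃ x, ckpFeas n m κ w b x) :
    ∃ xstar : Fin n → ℝ, ckpFeas n m κ w b xstar ∧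
      (∀ x : Fin n → ℝ, ckpFeas n m κ w b x → (∑ i, p i * x i) ≤ ∑ i, p i * xstar i) ∧
      Set.ncard {i : Fin n | 0 < xstar i ∧ xstar i < 1} ≤ 2 := by
  let profit : StrongDual ℝ (Fin n → ℝ) := (dotProductBilin ℝ ℝ p).toContinuousLinearMap
  obtain ⟨xstar, hext, hmax⟩ :=
    exists_mem_extremePoints_isMaxOn isCompact_ckpFeas hfeas profit
  exact ⟨xstar, hext.1, fun x hx => hmax hx, ncard_fractional_le_two hext⟩

end ColoredKnapsack

/-- There exists an optimal solution `x*` of the CKP-LP with at most two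
fractional coordinates, i.e. `|{i : 0 < x*_i < 1}| ≤ 2`. -/
theorem ckp_lp_optimum_with_at_most_two_fractional (n m : ℕ) (κ : Fin n → Fin m)
    (w p : Fin n → ℝ) (b : ℝ) (hw : ∀ i, 0 < w i) (hb : 0 < b) :
    ∃ xstar : Fin n → ℝ, ckpFeas n m κ w b xstar ∧
      (∀ x : Fin n → ℝ, ckpFeas n m κ w b x → (∑ i, p i * x i) ≤ ∑ i, p i * xstar i) ∧
      Set.ncard {i : Fin n | 0 < xstar i ∧ xstar i < 1} ≤ 2 :=
  ckp_lp_optimum_with_at_most_two_fractional_general p ⟨0, ckpFeas_zero hb.le⟩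
end

section
/- Define, for i, t, d, a ∈ {0,…,n} and q ∈ {0,…,b}, the value f(i,t,d,a,q) = max{ p(S) : S ⊆ {1,…,i}, |S| = t, k̄(S) = d, k_{κ_i}(S) = a, w(S) = q } (taken over a possibly empty collection of sets). Then the optimal value of the Colored Knapsack Problem, max{ p(S) : S ⊆ {1,…,n}, w(S) ≤ b, and k_c(S) ≤ (|S| − k_c(S)) + 1 for every color c }, equals the maximum of f(n,t,d,a,q) over all t, d, a ∈ {0,…,n} and q ∈ {0,…,b} with 2d ≤ t + 1 for which the defining collection of sets is nonempty. -/
/-!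
For a fixed set `S`, the color constraints for all colors together say exactly that
`2 k̄(S) ≤ |S| + 1`. As counts are at most `n` and weights are positive, `S` is feasible for the CKP
if and only if its tuple `(|S|, k̄(S), k_{κ n}(S), w(S))` lies in the range over which
`f(n, t, d, a, q)` is maximized. The numbers `f(n, t, d, a, q)` are the maxima of the profit over
the fibers of this tuple, so the maximum over all tuples in the range is the maximum over the
feasible sets.
-/

/-- `k_c(S)`: the number of items of color `c` in `S`. -/
def colCount (m : ℕ) (κ : ℕ → Fin m) (c : Fin m) (S : Finset ℕ) : ℕ :=
  (S.filter fun i => κ i = c).card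

/-- `k̄(S) = max_{c ∈ {1,…,m}} k_c(S)`: the cardinality of a dominant color in `S`. -/
def domCount (m : ℕ) (κ : ℕ → Fin m) (S : Finset ℕ) : ℕ :=
  Finset.univ.sup fun c : Fin m => colCount m κ c S

/-- The dynamic programming value
`f(i,t,d,a,q) = max{ p(S) : S ⊆ {1,…,i}, |S| = t, k̄(S) = d, k_{κ i}(S) = a, w(S) = q }`,
taken in `WithBot ℤ` so that an empty collection of sets has value `⊥`. -/
def fDP (m : ℕ) (κ : ℕ → Fin m) (w p : ℕ → ℤ) (i t d a : ℕ) (q : ℤ) : WithBot ℤ :=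
  ((Finset.Icc 1 i).powerset.filter fun S =>
      S.card = t ∧ domCount m κ S = d ∧ colCount m κ (κ i) S = a ∧ (∑ j ∈ S, w j) = q).sup
    fun S => ((∑ j ∈ S, p j : ℤ) : WithBot ℤ)

theorem sup_sup_filter_eq_sup_filter_mem {α β γ : Type*} [DecidableEq β]
    [SemilatticeSup γ] [OrderBot γ] (s : Finset α) (t : Finset β) (g : α → β) (f : α → γ) :
    (t.sup fun y => (s.filter fun x => g x = y).sup f) = (s.filter fun x => g x ∈ t).sup f :=
  eq_of_forall_ge_iff fun c => by
    simp only [Finset.sup_le_iff, Finset.mem_filter, and_imp]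
    exact ⟨fun h x hx hgx => h (g x) hgx x hx rfl, fun h _ hy x hx hgx => h x hx (hgx ▸ hy)⟩

section ColorCounts

variable {m : ℕ} (κ : ℕ → Fin m) (S : Finset ℕ)

theorem colCount_le_card (c : Fin m) : colCount m κ c S ≤ S.card :=
  Finset.card_filter_le _ _

theorem domCount_le_iff {d : ℕ} : domCount m κ S ≤ d ↔ ∀ c, colCount m κ c S ≤ d := by
  simp only [domCount, Finset.sup_le_iff, Finset.mem_univ, forall_const]

theorem domCount_le_card : domCount m κ S ≤ S.card :=
  (domCount_le_iff κ S).2 (colCount_le_card κ S)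

theorem two_mul_domCount_le_iff :
    2 * domCount m κ S ≤ S.card + 1 ↔
      ∀ c : Fin m, colCount m κ c S ≤ (S.card - colCount m κ c S) + 1 := by
  have color_constraint_iff (c : Fin m) :
      colCount m κ c S ≤ (S.card - colCount m κ c S) + 1 ↔
        colCount m κ c S ≤ (S.card + 1) / 2 := by
    -- The truncated subtraction is exact because `k_c(S) ≤ |S|`.
    have := colCount_le_card κ S c
    omega
  rw [forall_congr' color_constraint_iff, ← domCount_le_iff]
  omega

end ColorCounts

/-- The state `(t, d, a, q) = (|S|, k̄(S), k_{κ i}(S), w(S))` to which the dynamic program assigns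
`S` at stage `i`. The pair `(t, d)` is kept as one component, since it carries the constraint
`2d ≤ t + 1`. -/
def dpState {m : ℕ} (κ : ℕ → Fin m) (w : ℕ → ℤ) (i : ℕ) (S : Finset ℕ) : (ℕ × ℕ) × ℕ × ℤ :=
  ((S.card, domCount m κ S), colCount m κ (κ i) S, ∑ j ∈ S, w j)

/-- The states `(t, d, a, q)` with `t, d, a ∈ {0,…,n}`, `q ∈ {0,…,b}` and `2d ≤ t + 1`, over which
the dynamic program maximizes. -/
noncomputable def feasibleStates (n : ℕ) (b : ℤ) : Finset ((ℕ × ℕ) × ℕ × ℤ) :=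
  ((Finset.Icc 0 n ×ˢ Finset.Icc 0 n).filter fun td => 2 * td.2 ≤ td.1 + 1) ×ˢ
    Finset.Icc 0 n ×ˢ Finset.Icc 0 b

theorem fDP_eq_sup_filter_dpState {m : ℕ} (κ : ℕ → Fin m) (w p : ℕ → ℤ) (i : ℕ)
    (s : (ℕ × ℕ) × ℕ × ℤ) :
    fDP m κ w p i s.1.1 s.1.2 s.2.1 s.2.2 =
      ((Finset.Icc 1 i).powerset.filter fun S => dpState κ w i S = s).sup
        fun S => ((∑ j ∈ S, p j : ℤ) : WithBot ℤ) := by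
  simp only [fDP, dpState, Prod.ext_iff, and_assoc]

theorem dpState_mem_feasibleStates_iff {m n : ℕ} {κ : ℕ → Fin m} {w : ℕ → ℤ} {b : ℤ} {i : ℕ}
    {S : Finset ℕ} (hcard : S.card ≤ n) (hweight : 0 ≤ ∑ j ∈ S, w j) :
    dpState κ w i S ∈ feasibleStates n b ↔
      (∑ j ∈ S, w j) ≤ b ∧
        ∀ c : Fin m, colCount m κ c S ≤ (S.card - colCount m κ c S) + 1 := by
  have hdom : domCount m κ S ≤ n := (domCount_le_card κ S).trans hcard
  have hcol : colCount m κ (κ i) S ≤ n := (colCount_le_card κ S (κ i)).trans hcard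
  simp only [dpState, feasibleStates, Finset.mem_product, Finset.mem_filter, Finset.mem_Icc,
    zero_le, hcard, hdom, hcol, hweight, true_and, two_mul_domCount_le_iff, and_comm]

/-- The optimal value of the CKP,
`max{ p(S) : S ⊆ {1,…,n}, w(S) ≤ b, k_c(S) ≤ (|S| − k_c(S)) + 1 for every color c }`,
equals the maximum of `f(n,t,d,a,q)` over all `t, d, a ∈ {0,…,n}` and `q ∈ {0,…,b}` with
`2d ≤ t + 1` for which the defining collection of sets is nonempty (maxima taken in
`WithBot ℤ`, where the empty collection contributes `⊥`). -/
theorem ckp_value_eq_dp1_value (n m : ℕ) (hn : 1 ≤ n) (w p : ℕ → ℤ) (b : ℤ)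
    (κ : ℕ → Fin m) (hw : ∀ i ∈ Finset.Icc 1 n, 0 < w i) (hb : 0 < b) :
    ((Finset.Icc 1 n).powerset.filter fun S =>
        (∑ i ∈ S, w i) ≤ b ∧
        ∀ c : Fin m, colCount m κ c S ≤ (S.card - colCount m κ c S) + 1).sup
      (fun S => ((∑ i ∈ S, p i : ℤ) : WithBot ℤ))
    =
    ((Finset.Icc 0 n ×ˢ Finset.Icc 0 n).filter fun td => 2 * td.2 ≤ td.1 + 1).sup
      (fun td => (Finset.Icc 0 n).sup fun a => (Finset.Icc (0 : ℤ) b).sup fun q =>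
        fDP m κ w p n td.1 td.2 a q) := by
  have feasible_iff : ∀ S ∈ (Finset.Icc 1 n).powerset,
      ((∑ i ∈ S, w i) ≤ b ∧
        ∀ c : Fin m, colCount m κ c S ≤ (S.card - colCount m κ c S) + 1) ↔
      dpState κ w n S ∈ feasibleStates n b := by
    intro S hS
    have hsub : S ⊆ Finset.Icc 1 n := Finset.mem_powerset.1 hS
    have hcard : S.card ≤ n := by simpa using Finset.card_le_card hsub
    have hweight : 0 ≤ ∑ i ∈ S, w i := Finset.sum_nonneg fun i hi => (hw i (hsub hi)).le
    exact (dpState_mem_feasibleStates_iff hcard hweight).symm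
  calc
    _ = ((Finset.Icc 1 n).powerset.filter fun S => dpState κ w n S ∈ feasibleStates n b).sup
          fun S => ((∑ i ∈ S, p i : ℤ) : WithBot ℤ) := by
      rw [Finset.filter_congr feasible_iff]
    _ = (feasibleStates n b).sup fun s => fDP m κ w p n s.1.1 s.1.2 s.2.1 s.2.2 := by
      simp only [fDP_eq_sup_filter_dpState, sup_sup_filter_eq_sup_filter_mem]
    _ = _ := by
      simp only [feasibleStates, Finset.sup_product_left]
end

section
/- (Correctness of fathoming rule 2.) Let S ⊆ {1,…,i} with w(S) ≤ b, and let N ∈ ℕ be such that every T ⊆ {i+1,…,n} with w(T) ≤ b − w(S) satisfies |T| ≤ N. If 2·k̄(S) > |S| + 1 + N, then there is no T ⊆ {i+1,…,n} such that w(S ∪ T) ≤ b and S ∪ T satisfies the color constraint k_c(S ∪ T) ≤ (|S ∪ T| − k_c(S ∪ T)) + 1 for every color c. -/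
/-!
The color constraint on `U` says exactly that `2 * k̄(U) ≤ |U| + 1`. Passing from `S` to `S ∪ T`
cannot lower `k̄` and enlarges the set by `|T \ S|`, so the constraint on `S ∪ T` forces
`2 * k̄(S) ≤ |S| + 1 + |T \ S|`. The items of `T \ S` fit into the residual capacity `b - w(S)`,
hence there are at most `N` of them.
-/

section ColorCount

open Finset

variable {ι γ : Type*} [DecidableEq γ]

/-- The number `k_c(S)` of items of color `c` in `S`, where `κ` assigns colors to items. -/
def colorCount (κ : ι → γ) (c : γ) (S : Finset ι) : ℕ :=
  (S.filter fun j => κ j = c).card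

/-- The number `k̄(S)` of items in a most frequent color of `S`, used to express all color
constraints at once; it is `0` when there are no colors. -/
def maxColorCount [Fintype γ] (κ : ι → γ) (S : Finset ι) : ℕ :=
  univ.sup fun c => colorCount κ c S

/-- The color constraint: the items of each color outnumber the remaining items by at most one.
The natural-number subtraction does not truncate, as `colorCount κ c S ≤ S.card`. -/
def ColorBalanced (κ : ι → γ) (S : Finset ι) : Prop :=
  ∀ c, colorCount κ c S ≤ (S.card - colorCount κ c S) + 1

variable {κ : ι → γ} {S T : Finset ι}

theorem colorCount_le_card (κ : ι → γ) (c : γ) (S : Finset ι) : colorCount κ c S ≤ S.card :=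
  card_filter_le _ _

theorem colorCount_mono (κ : ι → γ) (c : γ) : Monotone (colorCount κ c) :=
  fun _ _ hST => card_le_card (filter_subset_filter _ hST)

theorem maxColorCount_mono [Fintype γ] (κ : ι → γ) : Monotone (maxColorCount κ) :=
  fun _ _ hST => sup_mono_fun fun c _ => colorCount_mono κ c hST

theorem colorBalanced_iff_two_mul_colorCount_le :
    ColorBalanced κ S ↔ ∀ c, 2 * colorCount κ c S ≤ S.card + 1 := by
  refine forall_congr' fun c => ?_
  have := colorCount_le_card κ c S
  omega

theorem colorBalanced_iff_two_mul_maxColorCount_le [Fintype γ] :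
    ColorBalanced κ S ↔ 2 * maxColorCount κ S ≤ S.card + 1 := by
  simp only [colorBalanced_iff_two_mul_colorCount_le, maxColorCount,
    mul_comm 2, ← Nat.le_div_iff_mul_le two_pos, Finset.sup_le_iff, mem_univ, true_imp_iff]

theorem ColorBalanced.two_mul_maxColorCount_le_of_union [Fintype γ] [DecidableEq ι]
    (h : ColorBalanced κ (S ∪ T)) :
    2 * maxColorCount κ S ≤ S.card + 1 + (T \ S).card :=
  calc
    2 * maxColorCount κ S ≤ 2 * maxColorCount κ (S ∪ T) :=
      Nat.mul_le_mul_left 2 (maxColorCount_mono κ subset_union_left)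
    _ ≤ (S ∪ T).card + 1 := colorBalanced_iff_two_mul_maxColorCount_le.mp h
    _ = S.card + 1 + (T \ S).card := by
      rw [← union_sdiff_self_eq_union, card_union_of_disjoint disjoint_sdiff, add_right_comm]

end ColorCount

theorem sum_sdiff_le_sub_sum_iff {ι M : Type*} [DecidableEq ι] [AddCommGroup M] [LE M]
    [AddRightMono M] {w : ι → M} {b : M} {S T : Finset ι} :
    ∑ j ∈ T \ S, w j ≤ b - ∑ j ∈ S, w j ↔ ∑ j ∈ S ∪ T, w j ≤ b := by
  rw [le_sub_iff_add_le, ← Finset.union_sdiff_left, Finset.sum_sdiff Finset.subset_union_left]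

theorem fathoming_rule_two_correct_general {ι γ M : Type*} [DecidableEq ι] [Fintype γ]
    [DecidableEq γ] [AddCommGroup M] [LE M] [AddRightMono M] {w : ι → M} {b : M} {κ : ι → γ}
    {S R : Finset ι} {N : ℕ}
    (hN : ∀ T ⊆ R, ∑ j ∈ T, w j ≤ b - ∑ j ∈ S, w j → T.card ≤ N)
    (hdom : S.card + 1 + N < 2 * maxColorCount κ S) :
    ¬ ∃ T ⊆ R, ∑ j ∈ S ∪ T, w j ≤ b ∧ ColorBalanced κ (S ∪ T) := by
  rintro ⟨T, hTR, hweight, hcolor⟩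
  have hcard : (T \ S).card ≤ N :=
    hN (T \ S) (Finset.sdiff_subset.trans hTR) (sum_sdiff_le_sub_sum_iff.mpr hweight)
  refine hdom.not_ge ?_
  calc
    2 * maxColorCount κ S ≤ S.card + 1 + (T \ S).card :=
      hcolor.two_mul_maxColorCount_le_of_union
    _ ≤ S.card + 1 + N := Nat.add_le_add_left hcard _

/-- correctness of fathoming rule 2: Let `S ⊆ {1,…,i}` with `w(S) ≤ b`, and
let `N` bound the cardinality of every `T ⊆ {i+1,…,n}` with `w(T) ≤ b − w(S)`. If
`2·k̄(S) > |S| + 1 + N`, then no `T ⊆ {i+1,…,n}` makes `S ∪ T` capacity-feasible and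
satisfy the color constraint `k_c(S ∪ T) ≤ (|S ∪ T| − k_c(S ∪ T)) + 1` for every color. -/
theorem fathoming_rule_two_correct (n m : ℕ) (w p : ℕ → ℤ) (b : ℤ) (κ : ℕ → Fin m)
    (hw : ∀ j ∈ Finset.Icc 1 n, 0 < w j) (hb : 0 < b)
    (i : ℕ) (hi : i ≤ n) (S : Finset ℕ) (hS : S ⊆ Finset.Icc 1 i)
    (hSw : (∑ j ∈ S, w j) ≤ b) (N : ℕ)
    (hN : ∀ T ⊆ Finset.Icc (i + 1) n,
      (∑ j ∈ T, w j) ≤ b - (∑ j ∈ S, w j) → T.card ≤ N)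
    (hdom : 2 * (Finset.univ.sup fun c : Fin m => (S.filter fun j => κ j = c).card)
      > S.card + 1 + N) :
    ¬ ∃ T ⊆ Finset.Icc (i + 1) n,
        (∑ j ∈ S ∪ T, w j) ≤ b ∧
        ∀ c : Fin m, ((S ∪ T).filter fun j => κ j = c).card
          ≤ ((S ∪ T).card - ((S ∪ T).filter fun j => κ j = c).card) + 1 :=
  fathoming_rule_two_correct_general hN hdom
end

section
/- (Correctness of fathoming rule 3.) Let S ⊆ {1,…,i} with w(S) ≤ b, and let T* ⊆ {i+1,…,n} satisfy w(T*) ≤ b − w(S) and p(T*) ≥ p(T) for every T ⊆ {i+1,…,n} with w(T) ≤ b − w(S). If S ∪ T* satisfies the color constraint k_c(S ∪ T*) ≤ (|S ∪ T*| − k_c(S ∪ T*)) + 1 for every color c, then S ∪ T* is CKP-feasible and p(S ∪ T) ≤ p(S ∪ T*) for every T ⊆ {i+1,…,n} such that S ∪ T is CKP-feasible; that is, S ∪ T* is an optimal CKP-feasible extension of S. -/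
/-!
Dropping the color constraints turns the extension problem for `S` into a plain knapsack problem
with residual capacity `b - w(S)`, a relaxation: the weight and the profit of `S ∪ T` split over
the disjoint sets `S` and `T`. A solution that is optimal for a relaxation and feasible for the
original problem is optimal for the original problem.
-/

/-- A set `S` is CKP-feasible if `w(S) ≤ b` and the color constraint
`k_c(S) ≤ (|S| − k_c(S)) + 1` holds for every color `c`. -/
def ckpFeasible (m : ℕ) (κ : ℕ → Fin m) (w : ℕ → ℤ) (b : ℤ) (S : Finset ℕ) : Prop :=
  (∑ j ∈ S, w j) ≤ b ∧
  ∀ c : Fin m, (S.filter fun j => κ j = c).card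
    ≤ (S.card - (S.filter fun j => κ j = c).card) + 1

section DisjointUnion

variable {ι G : Type*} [DecidableEq ι] {S T U : Finset ι}

theorem sum_union_le_iff_sum_le_sub [AddCommGroup G] [LE G] [AddLeftMono G] {w : ι → G} {b : G}
    (hST : Disjoint S T) : ∑ j ∈ S ∪ T, w j ≤ b ↔ ∑ j ∈ T, w j ≤ b - ∑ j ∈ S, w j := by
  rw [Finset.sum_union hST, le_sub_iff_add_le']

theorem sum_union_le_sum_union_of_sum_le_sum [AddCommMonoid G] [Preorder G] [AddLeftMono G]
    {p : ι → G} (hST : Disjoint S T) (hSU : Disjoint S U)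
    (hTU : ∑ j ∈ T, p j ≤ ∑ j ∈ U, p j) : ∑ j ∈ S ∪ T, p j ≤ ∑ j ∈ S ∪ U, p j := by
  rw [Finset.sum_union hST, Finset.sum_union hSU]
  gcongr

end DisjointUnion

theorem Icc_disjoint_Icc_of_lt {α : Type*} [Preorder α] [LocallyFiniteOrder α] {a b c d : α}
    (hbc : b < c) : Disjoint (Finset.Icc a b) (Finset.Icc c d) :=
  Finset.disjoint_left.mpr fun _ hab hcd =>
    ((Finset.mem_Icc.mp hab).2.trans_lt hbc).not_ge (Finset.mem_Icc.mp hcd).1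

/-- The color constraint of the CKP for every color, in the form it takes in `ckpFeasible`. The
subtraction is exact, since the items of color `c` in `A` are among the items of `A`. -/
def SatisfiesColorConstraints {ι γ : Type*} [DecidableEq γ] (κ : ι → γ) (A : Finset ι) : Prop :=
  ∀ c : γ, (A.filter fun j => κ j = c).card
    ≤ (A.card - (A.filter fun j => κ j = c).card) + 1

/-- `C` stands for the color constraints; any condition on sets of items may take their place. -/
theorem fathoming_rule_three_correct_general {ι G H : Type*} [DecidableEq ι]
    [AddCommGroup G] [LE G] [AddLeftMono G] [AddCommMonoid H] [Preorder H] [AddLeftMono H]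
    (w : ι → G) (p : ι → H) (b : G) (C : Finset ι → Prop) {S F Tstar : Finset ι}
    (hSF : Disjoint S F) (hTstar : Tstar ⊆ F)
    (hTstarw : ∑ j ∈ Tstar, w j ≤ b - ∑ j ∈ S, w j)
    (hTstaropt : ∀ T ⊆ F,
      ∑ j ∈ T, w j ≤ b - ∑ j ∈ S, w j → ∑ j ∈ T, p j ≤ ∑ j ∈ Tstar, p j)
    (hC : C (S ∪ Tstar)) :
    (∑ j ∈ S ∪ Tstar, w j ≤ b ∧ C (S ∪ Tstar)) ∧
    ∀ T ⊆ F, (∑ j ∈ S ∪ T, w j ≤ b ∧ C (S ∪ T)) →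
      ∑ j ∈ S ∪ T, p j ≤ ∑ j ∈ S ∪ Tstar, p j := by
  have disjoint_S {T : Finset ι} (hT : T ⊆ F) : Disjoint S T :=
    Finset.disjoint_of_subset_right hT hSF
  refine ⟨⟨(sum_union_le_iff_sum_le_sub (disjoint_S hTstar)).mpr hTstarw, hC⟩, ?_⟩
  rintro T hT ⟨hSTw, -⟩
  have residual_capacity : ∑ j ∈ T, w j ≤ b - ∑ j ∈ S, w j :=
    (sum_union_le_iff_sum_le_sub (disjoint_S hT)).mp hSTw
  exact sum_union_le_sum_union_of_sum_le_sum (disjoint_S hT) (disjoint_S hTstar)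
    (hTstaropt T hT residual_capacity)

/-- correctness of fathoming rule 3: Let `S ⊆ {1,…,i}` with `w(S) ≤ b`, and
let `T* ⊆ {i+1,…,n}` be a maximum-profit set among those with `w(T) ≤ b − w(S)`. If
`S ∪ T*` satisfies every color constraint, then `S ∪ T*` is CKP-feasible and is an optimal
CKP-feasible extension of `S`: `p(S ∪ T) ≤ p(S ∪ T*)` for every `T ⊆ {i+1,…,n}` with
`S ∪ T` CKP-feasible. -/
theorem fathoming_rule_three_correct (n m : ℕ) (w p : ℕ → ℤ) (b : ℤ) (κ : ℕ → Fin m)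
    (hw : ∀ j ∈ Finset.Icc 1 n, 0 < w j) (hb : 0 < b)
    (i : ℕ) (hi : i ≤ n) (S : Finset ℕ) (hS : S ⊆ Finset.Icc 1 i)
    (hSw : (∑ j ∈ S, w j) ≤ b)
    (Tstar : Finset ℕ) (hTstar : Tstar ⊆ Finset.Icc (i + 1) n)
    (hTstarw : (∑ j ∈ Tstar, w j) ≤ b - (∑ j ∈ S, w j))
    (hTstaropt : ∀ T ⊆ Finset.Icc (i + 1) n,
      (∑ j ∈ T, w j) ≤ b - (∑ j ∈ S, w j) → (∑ j ∈ T, p j) ≤ ∑ j ∈ Tstar, p j)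
    (hcolor : ∀ c : Fin m, ((S ∪ Tstar).filter fun j => κ j = c).card
      ≤ ((S ∪ Tstar).card - ((S ∪ Tstar).filter fun j => κ j = c).card) + 1) :
    ckpFeasible m κ w b (S ∪ Tstar) ∧
    ∀ T ⊆ Finset.Icc (i + 1) n,
      ckpFeasible m κ w b (S ∪ T) → (∑ j ∈ S ∪ T, p j) ≤ ∑ j ∈ S ∪ Tstar, p j :=
  fathoming_rule_three_correct_general w p b (SatisfiesColorConstraints κ)
    (Finset.disjoint_of_subset_left hS (Icc_disjoint_Icc_of_lt i.lt_add_one))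
    hTstar hTstarw hTstaropt hcolor
end

section
/- (Correctness of dominance rule 2, state merging at a color boundary.) Let i ∈ {1,…,n} and suppose every item j ∈ {i+1,…,n} has a color different from the color of every item in {1,…,i}. Let S, S' ⊆ {1,…,i} satisfy |S| = |S'|, 2·k̄(S) ≤ |S| + 1, and 2·k̄(S') ≤ |S'| + 1. Then for every T ⊆ {i+1,…,n}, the set S ∪ T satisfies 2·k̄(S ∪ T) ≤ |S ∪ T| + 1 if and only if S' ∪ T satisfies 2·k̄(S' ∪ T) ≤ |S' ∪ T| + 1. -/
/-!
A color occurring in `T` does not occur in `S'`, so its count in `S' ∪ T` is its count in `T`, which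
is at most its count in `S ∪ T`; as `|S| ≤ |S'|`, the bound for `S ∪ T` carries over to `S' ∪ T`.
A color not occurring in `T` satisfies the bound because `S'` does and adding `T` only enlarges the
total. Hence the color condition passes from `S ∪ T` to `S' ∪ T`, and when `|S| = |S'|` the argument
is symmetric.
-/

section

open Finset

variable {ι γ : Type*} [DecidableEq γ] {κ : ι → γ} {S S' T : Finset ι}

/-- The color condition `2 * k̄(S) ≤ |S| + 1` for the coloring `κ`. The maximum in `k̄(S)` is
replaced by a quantifier over the colors, so that infinitely many colors are allowed. -/
def ColorCondition (κ : ι → γ) (S : Finset ι) : Prop :=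
  ∀ c, 2 * #{j ∈ S | κ j = c} ≤ #S + 1

theorem colorCondition_iff_two_mul_sup_le [Fintype γ] :
    ColorCondition κ S ↔ 2 * (univ.sup fun c => #{j ∈ S | κ j = c}) ≤ #S + 1 := by
  simp only [ColorCondition, mul_comm 2, ← Nat.le_div_iff_mul_le two_pos, Finset.sup_le_iff,
    mem_univ, true_imp_iff]

variable [DecidableEq ι]

theorem ColorCondition.union_of_card_le (hS' : ColorCondition κ S')
    (hsep : ∀ t ∈ T, ∀ s ∈ S', κ t ≠ κ s) (hcard : #S ≤ #S')
    (hST : ColorCondition κ (S ∪ T)) : ColorCondition κ (S' ∪ T) := by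
  intro c
  by_cases hc : ∃ t ∈ T, κ t = c
  · obtain ⟨t, ht, rfl⟩ := hc
    have hdisj : Disjoint S' T := disjoint_right.mpr fun j hjT hjS' => hsep j hjT j hjS' rfl
    have hS'_none : {j ∈ S' | κ j = κ t} = ∅ :=
      filter_eq_empty_iff.mpr fun s hs => (hsep t ht s hs).symm
    calc 2 * #{j ∈ S' ∪ T | κ j = κ t}
        = 2 * #{j ∈ T | κ j = κ t} := by rw [filter_union, hS'_none, empty_union]
      _ ≤ 2 * #{j ∈ S ∪ T | κ j = κ t} := by gcongr; exact subset_union_right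
      _ ≤ #(S ∪ T) + 1 := hST (κ t)
      _ ≤ #S + #T + 1 := by gcongr; exact card_union_le S T
      _ ≤ #S' + #T + 1 := by gcongr
      _ = #(S' ∪ T) + 1 := by rw [card_union_of_disjoint hdisj]
  · have hT_none : {j ∈ T | κ j = c} = ∅ :=
      filter_eq_empty_iff.mpr fun t ht htc => hc ⟨t, ht, htc⟩
    calc 2 * #{j ∈ S' ∪ T | κ j = c}
        = 2 * #{j ∈ S' | κ j = c} := by rw [filter_union, hT_none, union_empty]
      _ ≤ #S' + 1 := hS' c
      _ ≤ #(S' ∪ T) + 1 := by gcongr; exact subset_union_left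

theorem dominance_rule_two_correct_general
    (hS : ColorCondition κ S) (hS' : ColorCondition κ S') (hcard : #S = #S')
    (hsep : ∀ t ∈ T, ∀ s ∈ S, κ t ≠ κ s) (hsep' : ∀ t ∈ T, ∀ s ∈ S', κ t ≠ κ s) :
    ColorCondition κ (S ∪ T) ↔ ColorCondition κ (S' ∪ T) :=
  ⟨hS'.union_of_card_le hsep' hcard.le, hS.union_of_card_le hsep hcard.ge⟩

end

/-- correctness of dominance rule 2, state merging at a color boundary:
Suppose every item in `{i+1,…,n}` has a color different from that of every item in
`{1,…,i}`. Let `S, S' ⊆ {1,…,i}` with `|S| = |S'|`, `2·k̄(S) ≤ |S| + 1`, and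
`2·k̄(S') ≤ |S'| + 1`. Then for every `T ⊆ {i+1,…,n}`, `S ∪ T` satisfies the color
condition `2·k̄(S ∪ T) ≤ |S ∪ T| + 1` iff `S' ∪ T` satisfies it. -/
theorem dominance_rule_two_correct (n m : ℕ) (κ : ℕ → Fin m)
    (i : ℕ) (hi1 : 1 ≤ i) (hin : i ≤ n)
    (hsplit : ∀ j ∈ Finset.Icc (i + 1) n, ∀ j' ∈ Finset.Icc 1 i, κ j ≠ κ j')
    (S S' : Finset ℕ) (hS : S ⊆ Finset.Icc 1 i) (hS' : S' ⊆ Finset.Icc 1 i)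
    (hcard : S.card = S'.card)
    (hSok : 2 * (Finset.univ.sup fun c : Fin m => (S.filter fun j => κ j = c).card)
      ≤ S.card + 1)
    (hS'ok : 2 * (Finset.univ.sup fun c : Fin m => (S'.filter fun j => κ j = c).card)
      ≤ S'.card + 1) :
    ∀ T ⊆ Finset.Icc (i + 1) n,
      (2 * (Finset.univ.sup fun c : Fin m => ((S ∪ T).filter fun j => κ j = c).card)
          ≤ (S ∪ T).card + 1
        ↔ 2 * (Finset.univ.sup fun c : Fin m => ((S' ∪ T).filter fun j => κ j = c).card)
          ≤ (S' ∪ T).card + 1) := by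
  simp only [← colorCondition_iff_two_mul_sup_le] at hSok hS'ok ⊢
  exact fun T hT => dominance_rule_two_correct_general hSok hS'ok hcard
    (fun t ht s hs => hsplit t (hT ht) s (hS hs)) (fun t ht s hs => hsplit t (hT ht) s (hS' hs))
end
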